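/- Let a > b > 0 and α > β > 0 be real numbers. Suppose (P, Q, Z) ∈ ℝ³ satisfies P = 0 together with the equations P − tanh(αQ + α(a−b)(P + tanh(βQ))) + tanh(βQ) = 0 and Z − α^{−1}·log(2·cosh(αQ + α(a−b)(P + tanh(βQ)))) + β^{−1}·log(2·cosh(βQ)) + (1/2)(a−b)(P + tanh(βQ))² = 0. Then Q = 0 and Z = (log 2)·(α^{−1} − β^{−1}); in particular Z < 0. (Equivalently: the only real solution Q of α(a−b)·tanh(βQ) = (β−α)·Q is Q = 0.) -/

import Mathlib

theorem aux_tanh_pos (x : ℝ) (hx : 0 < x) : 0 < Real.tanh x := by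
  rw [Real.tanh_eq_sinh_div_cosh]
  exact div_pos (Real.sinh_pos_iff.mpr hx) (Real.cosh_pos x)

/-- Uniqueness of the Reeb chord from `Λ_{a,α}` to `Λ_{b,β}` for `a > b > 0`,
`α > β > 0`: a point `(P,Q,Z)` of the Legendrian `Λ_{a,α}` with `P = 0`
necessarily has `Q = 0` and `Z = log 2 · (α⁻¹ - β⁻¹) < 0`; equivalently, the
only real solution of `α(a-b) tanh (βQ) = (β-α) Q` is `Q = 0`. -/
theorem unique_reeb_chord (a b α β : ℝ) (hab : b < a) (hb : 0 < b)
    (hαβ : β < α) (hβ : 0 < β) (P Q Z : ℝ) (hP : P = 0)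
    (h1 : P - Real.tanh (α * Q + α * (a - b) * (P + Real.tanh (β * Q)))
        + Real.tanh (β * Q) = 0)
    (h2 : Z - α⁻¹ * Real.log (2 * Real.cosh (α * Q + α * (a - b) * (P + Real.tanh (β * Q))))
        + β⁻¹ * Real.log (2 * Real.cosh (β * Q))
        + (1 / 2) * (a - b) * (P + Real.tanh (β * Q)) ^ 2 = 0) :
    Q = 0 ∧ Z = Real.log 2 * (α⁻¹ - β⁻¹) ∧ Z < 0 ∧
    (∀ Q' : ℝ, α * (a - b) * Real.tanh (β * Q') = (β - α) * Q' → Q' = 0) := by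
  have hα : 0 < α := hβ.trans hαβ
  have hc : 0 < α * (a - b) := mul_pos hα (sub_pos.mpr hab)
  have key : ∀ Q' : ℝ, α * (a - b) * Real.tanh (β * Q') = (β - α) * Q' → Q' = 0 := by
    intro x hx
    rcases lt_trichotomy x 0 with h | h | h
    · have ht := aux_tanh_pos (β * (-x)) (mul_pos hβ (neg_pos.mpr h))
      rw [mul_neg, Real.tanh_neg] at ht
      nlinarith [mul_pos hc ht, mul_pos (sub_pos.mpr hαβ) (neg_pos.mpr h)]
    · exact h
    · have ht := aux_tanh_pos (β * x) (mul_pos hβ h)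
      nlinarith [mul_pos hc ht, mul_pos (sub_pos.mpr hαβ) h]
  subst hP
  have hQ : Q = 0 := by
    apply key
    have h := Real.tanh_injective (show Real.tanh (α * Q + α * (a - b) * (0 + Real.tanh (β * Q)))
      = Real.tanh (β * Q) by linarith)
    rw [zero_add] at h
    linarith
  subst hQ
  have hZ : Z = Real.log 2 * (α⁻¹ - β⁻¹) := by
    simp at h2
    linarith
  refine ⟨rfl, hZ, ?_, key⟩
  rw [hZ]
  have hi : α⁻¹ < β⁻¹ := inv_strictAnti₀ hβ hαβ
  exact mul_neg_of_pos_of_neg (Real.log_pos (by norm_num)) (by linarith)
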